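/- Let Σ ⊂ ℝ^{n+1} be properly embedded in B_{r₀}(x₀), x₀ ∈ Σ, with |A|(x) ≤ 1/r₀ for x ∈ B_{r₀}(x₀) ∩ Σ. Assume x₀ = 0 and the tangent plane at x₀ is {x^{n+1} = 0}. Then there is a function u : {|x'| < r₀/96} → ℝ with u(0) = 0 and ∇u(0) = 0 such that the connected component of Σ ∩ {|x'| < r₀/96} containing x₀ is the graph {(x', u(x'))}, and |∇u|(x') ≤ 36|x'|/r₀. -/

import Mathlib

open Metric

/-- Append a last coordinate: `(y, a) ∈ ℝⁿ × ℝ ↦ ℝ^{n+1}`. -/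
noncomputable def snocE {n : ℕ} (y : EuclideanSpace ℝ (Fin n)) (a : ℝ) :
    EuclideanSpace ℝ (Fin (n + 1)) :=
  (WithLp.equiv 2 (Fin (n + 1) → ℝ)).symm (Fin.snoc ((WithLp.equiv 2 (Fin n → ℝ)) y) a)

/-- Drop the last coordinate: `ℝ^{n+1} → ℝⁿ`. -/
noncomputable def projE {n : ℕ} (z : EuclideanSpace ℝ (Fin (n + 1))) :
    EuclideanSpace ℝ (Fin n) :=
  (WithLp.equiv 2 (Fin n → ℝ)).symm
    (fun i => (WithLp.equiv 2 (Fin (n + 1) → ℝ)) z i.castSucc)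

/-- Near `p`, the set `S` coincides with the graph of `f` (in normal position: `f 0 = 0`,
`Df 0 = 0`) over the hyperplane obtained by rotating `{x_{n+1} = 0}` by the linear
isometry `e` and translating to `p`. -/
def IsGraphChartAt (n : ℕ) (S : Set (EuclideanSpace ℝ (Fin (n + 1))))
    (p : EuclideanSpace ℝ (Fin (n + 1)))
    (e : EuclideanSpace ℝ (Fin (n + 1)) ≃ₗᵢ[ℝ] EuclideanSpace ℝ (Fin (n + 1)))
    (r : ℝ) (f : EuclideanSpace ℝ (Fin n) → ℝ) : Prop :=
  0 < r ∧ f 0 = 0 ∧ fderiv ℝ f 0 = 0 ∧ ContDiffOn ℝ 2 f (ball 0 r) ∧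
    S ∩ ball p r =
      {z ∈ ball p r |
        ∃ y ∈ ball (0 : EuclideanSpace ℝ (Fin n)) r, z = p + e (snocE y (f y))}

section Sheets

open Filter Topology

set_option linter.unusedSectionVars false

variable {E : Type*} [NormedAddCommGroup E] [InnerProductSpace ℝ E]

/-- Near `q`, the set `S ⊆ E × ℝ` is a sheet with normal direction `(a, c)`: differences of nearby
points of `S` are almost orthogonal to `(a, c)`, with a defect at most linear in the distance
to `q`; and if the normal is close to vertical, `S` has points over all base points near `q.1`. -/
structure LocalSheet (S : Set (E × ℝ)) (M : ℝ) (q : E × ℝ) (a : E) (c δ : ℝ) : Prop where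
  pos : 0 < δ
  one_le : 1 ≤ ‖a‖ + |c|
  flat : ∀ m < δ, ∀ p₁ ∈ S, ∀ p₂ ∈ S, ‖p₁.1 - q.1‖ + |p₁.2 - q.2| ≤ m →
    ‖p₂.1 - q.1‖ + |p₂.2 - q.2| ≤ m →
    |inner ℝ a (p₁.1 - p₂.1) + c * (p₁.2 - p₂.2)| ≤
      M * m * (‖p₁.1 - p₂.1‖ + |p₁.2 - p₂.2|)
  exists_over : ‖a‖ ≤ |c| / 3 → ∀ s, 0 < s → s ≤ δ → ∀ y, ‖y - q.1‖ ≤ s / 2 →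
    ∃ z, |z - q.2| ≤ s ∧ (y, z) ∈ S

/-- A relatively closed subset of `{‖y‖ + |z| < r₀}` in `E × ℝ` that consists of sheets with
curvature controlled by `2 / r₀` and is horizontal at the origin. -/
structure SheetedSet (S : Set (E × ℝ)) (r₀ : ℝ) : Prop where
  pos : 0 < r₀
  zero_mem : ((0 : E), (0 : ℝ)) ∈ S
  closed : ∀ p ∈ closure S, ‖p.1‖ + |p.2| < r₀ → p ∈ S
  sheet : ∀ p ∈ S, ‖p.1‖ + |p.2| < r₀ → ∃ a c δ, LocalSheet S (2 / r₀) p a c δ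
  horizontal : ∃ c δ, LocalSheet S (2 / r₀) (0, 0) 0 c δ

/-- `u` is, over the ball of radius `R`, a function with slope at most one whose graph lies
in `S` and passes through the origin. -/
structure GraphOver (S : Set (E × ℝ)) (r₀ R : ℝ) (u : E → ℝ) : Prop where
  zero : u 0 = 0
  mem : ∀ y ∈ ball (0 : E) R, (y, u y) ∈ S
  bound : ∀ y ∈ ball (0 : E) R, |u y| < r₀ / 2
  lip : ∀ y ∈ ball (0 : E) R, ∀ᶠ y' in 𝓝 y, |u y' - u y| ≤ ‖y' - y‖

variable {S : Set (E × ℝ)} {M r₀ R c δ κ : ℝ} {q : E × ℝ} {a : E} {u : E → ℝ} {y : E}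

theorem LocalSheet.norm_le (h : LocalSheet S M q a c δ) (hκ : 0 ≤ κ) (hM : 0 ≤ M)
    (hu : ∀ ε > 0, ∃ y₁, ‖y₁ - q.1‖ < ε ∧ |u y₁ - q.2| < ε ∧ (∀ᶠ y' in 𝓝 y₁, (y', u y') ∈ S) ∧
      ∀ᶠ y' in 𝓝 y₁, |u y' - u y₁| ≤ κ * ‖y' - y₁‖) : ‖a‖ ≤ κ * |c| := by
  rcases eq_or_ne a 0 with rfl | ha
  · simpa using by positivity
  have ha' : 0 < ‖a‖ := norm_pos_iff.2 ha
  have key : ∀ m, 0 < m → m < δ → ‖a‖ ≤ κ * |c| + M * m * (1 + κ) := by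
    intro m hm hmδ
    obtain ⟨y₁, h1, h2, h3, h4⟩ := hu (m / 4) (by positivity)
    have hmem₁ : (y₁, u y₁) ∈ S := h3.self_of_nhds
    have hlim : Tendsto (fun t : ℝ => y₁ + t • a) (𝓝[>] 0) (𝓝 y₁) := by
      have : Tendsto (fun t : ℝ => y₁ + t • a) (𝓝 0) (𝓝 (y₁ + (0 : ℝ) • a)) :=
        Continuous.tendsto (by fun_prop) 0
      simpa using this.mono_left nhdsWithin_le_nhds
    have hnear : ∀ᶠ y' in 𝓝 y₁, (1 + κ) * ‖y' - y₁‖ < m / 4 := by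
      have : Tendsto (fun y' => (1 + κ) * ‖y' - y₁‖) (𝓝 y₁) (𝓝 ((1 + κ) * ‖y₁ - y₁‖)) :=
        Continuous.tendsto (by fun_prop) y₁
      exact this.eventually_lt_const (by simpa using by positivity)
    obtain ⟨t, ⟨⟨h3, h4⟩, h5⟩, ht⟩ :=
      ((hlim.eventually ((h3.and h4).and hnear)).and self_mem_nhdsWithin).exists
    have ht : 0 < t := ht
    set y₂ := y₁ + t • a
    have e1 : y₂ - y₁ = t • a := by simp [y₂]
    have e2 : ‖y₂ - y₁‖ = t * ‖a‖ := by rw [e1, norm_smul, Real.norm_of_nonneg ht.le]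
    have hn : ‖y₂ - q.1‖ ≤ ‖y₂ - y₁‖ + ‖y₁ - q.1‖ := norm_sub_le_norm_sub_add_norm_sub ..
    have hn2 : |u y₂ - q.2| ≤ |u y₂ - u y₁| + |u y₁ - q.2| := abs_sub_le ..
    have hflat := h.flat m hmδ (y₂, u y₂) h3 (y₁, u y₁) hmem₁ (by simp only; linarith)
      (by simp only; linarith)
    simp only [e1, inner_smul_right, real_inner_self_eq_norm_sq] at hflat
    rw [← e1, e2] at hflat
    rw [e2] at h4
    have h6 : |c * (u y₂ - u y₁)| ≤ |c| * (κ * (t * ‖a‖)) := by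
      rw [abs_mul]; gcongr
    have h7 := (abs_le.1 hflat).2
    have h8 := (abs_le.1 h6).1
    have h9 : M * m * (t * ‖a‖ + |u y₂ - u y₁|) ≤ M * m * (t * ‖a‖ + κ * (t * ‖a‖)) := by
      gcongr
    have h10 : (t * ‖a‖) * ‖a‖ ≤ (t * ‖a‖) * (κ * |c| + M * m * (1 + κ)) := by nlinarith
    exact le_of_mul_le_mul_left h10 (by positivity)
  have hlim : Tendsto (fun m : ℝ => κ * |c| + M * m * (1 + κ)) (𝓝[>] 0) (𝓝 (κ * |c|)) := by
    have : Tendsto (fun m : ℝ => κ * |c| + M * m * (1 + κ)) (𝓝 0)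
        (𝓝 (κ * |c| + M * 0 * (1 + κ))) := Continuous.tendsto (by fun_prop) 0
    simpa using this.mono_left nhdsWithin_le_nhds
  refine ge_of_tendsto hlim ?_
  filter_upwards [Ioo_mem_nhdsGT h.pos] with m hm using key m hm.1 hm.2

theorem LocalSheet.half_le (h : LocalSheet S M q a c δ) (hac : ‖a‖ ≤ |c|) : 1 / 2 ≤ |c| := by
  linarith [h.one_le]

theorem LocalSheet.hasFDerivAt (h : LocalSheet S M (y, u y) a c δ) (hM : 0 ≤ M)
    (hmem : ∀ᶠ y' in 𝓝 y, (y', u y') ∈ S) (hlip : ∀ᶠ y' in 𝓝 y, |u y' - u y| ≤ ‖y' - y‖) :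
    1 / 2 ≤ |c| ∧ HasFDerivAt u (-(c⁻¹ • innerSL ℝ a)) y := by
  have hac : ‖a‖ ≤ |c| := by
    simpa using h.norm_le (u := u) zero_le_one hM fun ε hε =>
      ⟨y, by simpa using hε, by simpa using hε, hmem, by simpa using hlip⟩
  have hc := h.half_le hac
  refine ⟨hc, ?_⟩
  have hc0 : c ≠ 0 := by rintro rfl; norm_num at hc
  rw [hasFDerivAt_iff_isLittleO]
  have hO : (fun y' => u y' - u y - (-(c⁻¹ • innerSL ℝ a)) (y' - y)) =O[𝓝 y]
      fun y' => ‖y' - y‖ ^ 2 := by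
    refine Asymptotics.IsBigO.of_bound (4 * M / |c|) ?_
    have hnear : ∀ᶠ y' in 𝓝 y, 2 * ‖y' - y‖ < δ := by
      have : Tendsto (fun y' => 2 * ‖y' - y‖) (𝓝 y) (𝓝 (2 * ‖y - y‖)) :=
        Continuous.tendsto (by fun_prop) y
      exact this.eventually_lt_const (by simpa using h.pos)
    filter_upwards [hmem, hlip, hnear] with y' h1 h2 h3
    have hflat := h.flat _ h3 (y', u y') h1 (y, u y) hmem.self_of_nhds (by simp only; linarith)
      (by simp)
    simp only at hflat
    have e : u y' - u y - (-(c⁻¹ • innerSL ℝ a)) (y' - y) =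
        c⁻¹ * (inner ℝ a (y' - y) + c * (u y' - u y)) := by
      simp only [neg_apply, smul_apply, innerSL_apply_apply,
        smul_eq_mul]
      field_simp
      ring
    rw [e, norm_mul, norm_inv, Real.norm_eq_abs, Real.norm_eq_abs, norm_pow, norm_norm]
    calc _ ≤ |c|⁻¹ * (M * (2 * ‖y' - y‖) * (‖y' - y‖ + ‖y' - y‖)) := by
          gcongr
          refine hflat.trans ?_
          gcongr
      _ = _ := by ring
  exact hO.trans_isLittleO (Asymptotics.isLittleO_pow_sub_sub y one_lt_two)

theorem LocalSheet.eventually_norm_fderiv_sub_le (h : LocalSheet S M (y, u y) a c δ) (hM : 0 ≤ M)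
    (hmem : ∀ᶠ y' in 𝓝 y, (y', u y') ∈ S)
    (hlip : ∀ᶠ y₁ in 𝓝 y, ∀ᶠ y' in 𝓝 y₁, |u y' - u y₁| ≤ ‖y' - y₁‖)
    (hdiff : ∀ᶠ y' in 𝓝 y, DifferentiableAt ℝ u y') :
    ∀ᶠ y' in 𝓝 y, ‖fderiv ℝ u y' - fderiv ℝ u y‖ ≤ 12 * M * ‖y' - y‖ := by
  obtain ⟨hc, hd⟩ := h.hasFDerivAt hM hmem hlip.self_of_nhds
  have hc0 : c ≠ 0 := by rintro rfl; norm_num at hc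
  have hnear : ∀ᶠ y' in 𝓝 y, 3 * ‖y' - y‖ < δ := by
    have : Tendsto (fun y' => 3 * ‖y' - y‖) (𝓝 y) (𝓝 (3 * ‖y - y‖)) :=
      Continuous.tendsto (by fun_prop) y
    exact this.eventually_lt_const (by simpa using h.pos)
  filter_upwards [hmem.eventually_nhds, hlip.self_of_nhds.eventually_nhds, hlip, hdiff, hnear]
    with y₁ h1 h2 h3 h4 h5
  rcases eq_or_ne y₁ y with rfl | hne
  · simp
  have hpos : 0 < ‖y₁ - y‖ := norm_pos_iff.2 (sub_ne_zero.2 hne)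
  set L := fderiv ℝ u y₁
  have hL : HasFDerivAt (fun x => inner ℝ a x + c * u x) (innerSL ℝ a + c • L) y₁ :=
    (innerSL ℝ a).hasFDerivAt.add (h4.hasFDerivAt.const_mul c)
  have hclose : ∀ᶠ y' in 𝓝 y₁, 2 * ‖y' - y‖ < 3 * ‖y₁ - y‖ := by
    have : Tendsto (fun y' => 2 * ‖y' - y‖) (𝓝 y₁) (𝓝 (2 * ‖y₁ - y‖)) :=
      Continuous.tendsto (by fun_prop) y₁
    exact this.eventually_lt_const (by linarith)
  have hbound : ‖innerSL ℝ a + c • L‖ ≤ M * (3 * ‖y₁ - y‖) * 2 := by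
    refine hL.le_of_lip' (by positivity) ?_
    filter_upwards [h1, h2, h3, hclose] with y' g1 g2 g3 g4
    have hflat := h.flat _ h5 (y', u y') g1 (y₁, u y₁) h1.self_of_nhds (by simp only; linarith)
      (by have := h2.self_of_nhds; simp only; linarith)
    simp only at hflat
    have e : inner ℝ a y' + c * u y' - (inner ℝ a y₁ + c * u y₁) =
        inner ℝ a (y' - y₁) + c * (u y' - u y₁) := by rw [inner_sub_right]; ring
    rw [e, Real.norm_eq_abs]
    calc _ ≤ _ := hflat
      _ ≤ M * (3 * ‖y₁ - y‖) * (‖y' - y₁‖ + ‖y' - y₁‖) := by gcongr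
      _ = _ := by ring
  have e : L - fderiv ℝ u y = c⁻¹ • (innerSL ℝ a + c • L) := by
    rw [hd.fderiv, smul_add, smul_smul, inv_mul_cancel₀ hc0, one_smul]; abel
  rw [e, norm_smul, norm_inv, Real.norm_eq_abs]
  have hc2 : |c|⁻¹ ≤ 2 := by
    rw [inv_le_comm₀ (by linarith) two_pos]; linarith
  calc _ ≤ 2 * (M * (3 * ‖y₁ - y‖) * 2) := by gcongr
    _ = _ := by ring

theorem GraphOver.mono {R' : ℝ} (hu : GraphOver S r₀ R u) (h : R' ≤ R) : GraphOver S r₀ R' u :=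
  ⟨hu.zero, fun y hy => hu.mem y (ball_subset_ball h hy),
    fun y hy => hu.bound y (ball_subset_ball h hy), fun y hy => hu.lip y (ball_subset_ball h hy)⟩

theorem GraphOver.eventually_mem (hu : GraphOver S r₀ R u) (hy : y ∈ ball (0 : E) R) :
    ∀ᶠ y' in 𝓝 y, (y', u y') ∈ S := by
  filter_upwards [isOpen_ball.mem_nhds hy] with y' hy' using hu.mem y' hy'

theorem GraphOver.norm_add_lt (hS : SheetedSet S r₀) (hu : GraphOver S r₀ R u)
    (hR : R ≤ r₀ / 96) (hy : y ∈ ball (0 : E) R) : ‖y‖ + |u y| < r₀ := by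
  have h1 := hu.bound y hy
  have h2 := hS.pos
  rw [mem_ball_zero_iff] at hy
  linarith

theorem GraphOver.differentiableAt (hS : SheetedSet S r₀) (hu : GraphOver S r₀ R u)
    (hR : R ≤ r₀ / 96) (hy : y ∈ ball (0 : E) R) : DifferentiableAt ℝ u y := by
  obtain ⟨a, c, δ, h⟩ := hS.sheet _ (hu.mem y hy) (hu.norm_add_lt hS hR hy)
  have := hS.pos
  exact (h.hasFDerivAt (by positivity) (hu.eventually_mem hy) (hu.lip y hy)).2.differentiableAt

theorem GraphOver.fderiv_zero (hS : SheetedSet S r₀) (hu : GraphOver S r₀ R u) (hR : 0 < R) :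
    fderiv ℝ u 0 = 0 := by
  obtain ⟨c, δ, h⟩ := hS.horizontal
  have := hS.pos
  have hy : (0 : E) ∈ ball (0 : E) R := mem_ball_self hR
  rw [← hu.zero] at h
  rw [(h.hasFDerivAt (by positivity) (hu.eventually_mem hy) (hu.lip 0 hy)).2.fderiv]
  simp

theorem GraphOver.eventually_norm_fderiv_sub_le (hS : SheetedSet S r₀) (hu : GraphOver S r₀ R u)
    (hR : R ≤ r₀ / 96) (hy : y ∈ ball (0 : E) R) :
    ∀ᶠ y' in 𝓝 y, ‖fderiv ℝ u y' - fderiv ℝ u y‖ ≤ 24 / r₀ * ‖y' - y‖ := by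
  obtain ⟨a, c, δ, h⟩ := hS.sheet _ (hu.mem y hy) (hu.norm_add_lt hS hR hy)
  have := hS.pos
  have hnhds := isOpen_ball.mem_nhds hy
  have := h.eventually_norm_fderiv_sub_le (by positivity) (hu.eventually_mem hy)
    (by filter_upwards [hnhds] with y' hy' using hu.lip y' hy')
    (by filter_upwards [hnhds] with y' hy' using hu.differentiableAt hS hR hy')
  filter_upwards [this] with y' hy'
  convert hy' using 2
  ring

theorem GraphOver.norm_fderiv_le (hS : SheetedSet S r₀) (hu : GraphOver S r₀ R u)
    (hR : R ≤ r₀ / 96) (hy : y ∈ ball (0 : E) R) : ‖fderiv ℝ u y‖ ≤ 30 / r₀ * ‖y‖ := by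
  have hr := hS.pos
  have hR0 : 0 < R := pos_of_mem_ball hy
  rcases eq_or_ne y 0 with rfl | hne
  · simp [hu.fderiv_zero hS hR0]
  have hny : 0 < ‖y‖ := norm_pos_iff.2 hne
  have hseg : ∀ t ∈ Set.Icc (0 : ℝ) 1, t • y ∈ ball (0 : E) R := by
    intro t ht
    rw [mem_ball_zero_iff] at hy ⊢
    rw [norm_smul, Real.norm_of_nonneg ht.1]
    nlinarith [ht.2]
  have hcont : ∀ x ∈ ball (0 : E) R, ContinuousAt (fderiv ℝ u) x := by
    intro x hx
    refine tendsto_iff_norm_sub_tendsto_zero.2 (squeeze_zero' (.of_forall fun _ => norm_nonneg _)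
      (hu.eventually_norm_fderiv_sub_le hS hR hx) ?_)
    have : Tendsto (fun x' => 24 / r₀ * ‖x' - x‖) (𝓝 x) (𝓝 (24 / r₀ * ‖x - x‖)) :=
      Continuous.tendsto (by fun_prop) x
    simpa using this
  have hev : ∀ t ∈ Set.Icc (0 : ℝ) 1, ∀ᶠ s in 𝓝[>] t,
      slope (norm ∘ fun s : ℝ => fderiv ℝ u (s • y)) t s ≤ 24 / r₀ * ‖y‖ := by
    intro t ht
    have hlim : Tendsto (fun s : ℝ => s • y) (𝓝[>] t) (𝓝 (t • y)) :=
      (Continuous.tendsto (by fun_prop) t).mono_left nhdsWithin_le_nhds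
    filter_upwards [hlim.eventually (hu.eventually_norm_fderiv_sub_le hS hR (hseg t ht)),
      self_mem_nhdsWithin] with s hs hts
    have hts : 0 < s - t := sub_pos.2 hts
    rw [slope_def_field, div_le_iff₀ hts]
    rw [← sub_smul, norm_smul, Real.norm_of_nonneg hts.le] at hs
    calc _ ≤ ‖fderiv ℝ u (s • y) - fderiv ℝ u (t • y)‖ := norm_sub_norm_le _ _
      _ ≤ _ := hs
      _ = _ := by ring
  have := image_norm_le_of_liminf_right_slope_norm_lt_deriv_boundary
    (f := fun s : ℝ => fderiv ℝ u (s • y)) (f' := fun _ => 24 / r₀ * ‖y‖) (a := 0) (b := 1)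
    (B := fun t => t * (30 / r₀ * ‖y‖)) (B' := fun _ => 30 / r₀ * ‖y‖)
    (fun t ht => ContinuousAt.continuousWithinAt
      (ContinuousAt.comp (hcont _ (hseg t ht)) (by fun_prop)))
    (fun t ht r hr => ((hev t ⟨ht.1, ht.2.le⟩).mono fun s hs => hs.trans_lt hr).frequently)
    (by simp [hu.fderiv_zero hS hR0]) (by fun_prop)
    (fun t _ => by simpa using ((hasDerivAt_id t).mul_const (30 / r₀ * ‖y‖)).hasDerivWithinAt)
    (fun t _ _ => by gcongr; norm_num)
  simpa using this (Set.right_mem_Icc.2 zero_le_one)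

theorem GraphOver.norm_fderiv_le_third (hS : SheetedSet S r₀) (hu : GraphOver S r₀ R u)
    (hR : R ≤ r₀ / 96) (hy : y ∈ ball (0 : E) R) : ‖fderiv ℝ u y‖ ≤ 1 / 3 := by
  have hr := hS.pos
  refine (hu.norm_fderiv_le hS hR hy).trans ?_
  rw [mem_ball_zero_iff] at hy
  rw [div_mul_eq_mul_div, div_le_iff₀ hr]
  linarith

theorem GraphOver.abs_sub_le (hS : SheetedSet S r₀) (hu : GraphOver S r₀ R u)
    (hR : R ≤ r₀ / 96) {y₁ y₂ : E} (h₁ : y₁ ∈ ball (0 : E) R) (h₂ : y₂ ∈ ball (0 : E) R) :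
    |u y₂ - u y₁| ≤ 1 / 3 * ‖y₂ - y₁‖ :=
  (convex_ball (0 : E) R).norm_image_sub_le_of_norm_fderiv_le
    (fun _ hy => hu.differentiableAt hS hR hy) (fun _ hy => hu.norm_fderiv_le_third hS hR hy) h₁ h₂

/-- Near `q`, the set `S` is the graph of a function of slope at most one over a neighbourhood
of `q.1`. -/
def IsGraphNear (S : Set (E × ℝ)) (q : E × ℝ) (δ : ℝ) : Prop :=
  0 < δ ∧ (∀ p₁ ∈ S, ∀ p₂ ∈ S, dist p₁ q < δ → dist p₂ q < δ → |p₁.2 - p₂.2| ≤ ‖p₁.1 - p₂.1‖) ∧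
    ∀ s, 0 < s → s ≤ δ → ∀ y, ‖y - q.1‖ ≤ s / 2 → ∃ z, |z - q.2| ≤ s ∧ (y, z) ∈ S

theorem LocalSheet.isGraphNear (h : LocalSheet S M q a c δ) (hM : 0 < M) (hac : ‖a‖ ≤ |c| / 3) :
    ∃ δ', IsGraphNear S q δ' := by
  have hc : 1 / 2 ≤ |c| := h.half_le (by linarith [abs_nonneg c])
  have hδ := h.pos
  have hc0 : 0 < |c| := by linarith
  refine ⟨min (δ / 4) (|c| / (8 * M)), by positivity, ?_, fun s hs hsδ y hy =>
    h.exists_over hac s hs (by linarith [min_le_left (δ / 4) (|c| / (8 * M))]) y hy⟩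
  set δ' := min (δ / 4) (|c| / (8 * M)) with hδ'
  have hδ'0 : 0 < δ' := by positivity
  have h1 : δ' ≤ δ / 4 := min_le_left _ _
  have h2 : M * (2 * δ') ≤ |c| / 4 := by
    have : δ' ≤ |c| / (8 * M) := min_le_right _ _
    rw [le_div_iff₀ (by positivity)] at this
    linarith
  intro p₁ hp₁ p₂ hp₂ hd₁ hd₂
  have hsum : ∀ p : E × ℝ, dist p q < δ' → ‖p.1 - q.1‖ + |p.2 - q.2| ≤ 2 * δ' := by
    intro p hp
    rw [Prod.dist_eq, max_lt_iff, dist_eq_norm, Real.dist_eq] at hp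
    linarith
  have hflat := h.flat (2 * δ') (by linarith) p₁ hp₁ p₂ hp₂ (hsum _ hd₁) (hsum _ hd₂)
  have hin := abs_real_inner_le_norm a (p₁.1 - p₂.1)
  have h3 : |c| * |p₁.2 - p₂.2| ≤
      |inner ℝ a (p₁.1 - p₂.1) + c * (p₁.2 - p₂.2)| + |inner ℝ a (p₁.1 - p₂.1)| := by
    rw [← abs_mul]
    have := abs_sub (inner ℝ a (p₁.1 - p₂.1) + c * (p₁.2 - p₂.2)) (inner ℝ a (p₁.1 - p₂.1))
    simpa using this
  have h4 : M * (2 * δ') * (‖p₁.1 - p₂.1‖ + |p₁.2 - p₂.2|) ≤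
      |c| / 4 * (‖p₁.1 - p₂.1‖ + |p₁.2 - p₂.2|) := by gcongr
  have h5 : ‖a‖ * ‖p₁.1 - p₂.1‖ ≤ |c| / 3 * ‖p₁.1 - p₂.1‖ := by gcongr
  have h6 : 0 ≤ |c| * ‖p₁.1 - p₂.1‖ := by positivity
  have h7 : |c| * |p₁.2 - p₂.2| ≤ |c| * ‖p₁.1 - p₂.1‖ := by nlinarith
  exact le_of_mul_le_mul_left h7 hc0

/-- The sheet of `S` through a limit point of the graph of `u` is itself a graph. -/
theorem GraphOver.isGraphNear (hS : SheetedSet S r₀) (hu : GraphOver S r₀ R u)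
    (hR : R ≤ r₀ / 96) (hq : q ∈ S) (hqr : ‖q.1‖ + |q.2| < r₀)
    (hlim : ∀ ε > 0, ∃ y ∈ ball (0 : E) R, ‖y - q.1‖ < ε ∧ |u y - q.2| < ε) :
    ∃ δ, IsGraphNear S q δ := by
  obtain ⟨a, c, δ, h⟩ := hS.sheet _ hq hqr
  have := hS.pos
  refine h.isGraphNear (by positivity) ?_
  have := h.norm_le (κ := 1 / 3) (u := u) (by norm_num) (by positivity) fun ε hε => by
    obtain ⟨y, hy, h1, h2⟩ := hlim ε hε
    refine ⟨y, h1, h2, hu.eventually_mem hy, ?_⟩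
    filter_upwards [isOpen_ball.mem_nhds hy] with y' hy' using hu.abs_sub_le hS hR hy hy'
  linarith

theorem GraphOver.isGraphNear_self (hS : SheetedSet S r₀) (hu : GraphOver S r₀ R u)
    (hR : R ≤ r₀ / 96) (hy : y ∈ ball (0 : E) R) : ∃ δ, IsGraphNear S (y, u y) δ :=
  hu.isGraphNear hS hR (hu.mem y hy) (hu.norm_add_lt hS hR hy) fun ε hε =>
    ⟨y, hy, by simpa using hε, by simpa using hε⟩

theorem GraphOver.continuousOn (hS : SheetedSet S r₀) (hu : GraphOver S r₀ R u)
    (hR : R ≤ r₀ / 96) : ContinuousOn u (ball 0 R) := fun _ hy =>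
  (hu.differentiableAt hS hR hy).continuousAt.continuousWithinAt

theorem GraphOver.eqOn {v : E → ℝ} (hS : SheetedSet S r₀) (hu : GraphOver S r₀ R u)
    (hv : GraphOver S r₀ R v) (hR : R ≤ r₀ / 96) : Set.EqOn u v (ball 0 R) := by
  rcases le_or_gt R 0 with hR0 | hR0
  · simp [ball_eq_empty.2 hR0]
  have hkey : ∀ y ∈ ball (0 : E) R, u y = v y → ∀ᶠ y' in 𝓝 y, u y' = v y' := by
    intro y hy huv
    obtain ⟨δ, hδ, h, -⟩ := hu.isGraphNear_self hS hR hy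
    have hnear : ∀ {w : E → ℝ}, GraphOver S r₀ R w → w y = u y →
        ∀ᶠ y' in 𝓝 y, dist (y', w y') (y, u y) < δ := fun {w} hw hwy => by
      have : Tendsto (fun y' => (y', w y')) (𝓝 y) (𝓝 (y, u y)) := by
        rw [← hwy]
        exact continuousAt_id.prodMk (hw.differentiableAt hS hR hy).continuousAt
      exact this.eventually (ball_mem_nhds _ hδ)
    filter_upwards [hnear hu rfl, hnear hv huv.symm, isOpen_ball.mem_nhds hy] with y' h1 h2 h3
    simpa [sub_eq_zero] using h _ (hu.mem y' h3) _ (hv.mem y' h3) h1 h2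
  have hsub : ball (0 : E) R ⊆ {y | ∀ᶠ y' in 𝓝 y, u y' = v y'} := by
    refine (convex_ball (0 : E) R).isPreconnected.subset_of_closure_inter_subset
      isOpen_setOfPred_eventually_nhds
      ⟨0, mem_ball_self hR0, hkey 0 (mem_ball_self hR0) (hu.zero.trans hv.zero.symm)⟩ ?_
    rintro y ⟨hy, hyR⟩
    refine hkey y hyR (by_contra fun hne => ?_)
    have hev := ((hu.differentiableAt hS hR hyR).continuousAt.sub
      (hv.differentiableAt hS hR hyR).continuousAt).eventually_ne (sub_ne_zero.2 hne)
    obtain ⟨y', hy', hy''⟩ := mem_closure_iff_nhds.1 hy _ hev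
    exact hy' (sub_eq_zero.2 hy''.self_of_nhds)
  exact fun y hy => (hsub hy).self_of_nhds

/-- A Lipschitz function on a compact set, along whose graph `S` is locally a graph, has a
uniform tubular neighbourhood in which `S` is a graph. -/
theorem exists_uniform_graph {K : Set E} {g : E → ℝ} (hK : IsCompact K)
    (hg : ∀ y y', |g y - g y'| ≤ ‖y - y'‖) (hmem : ∀ y ∈ K, (y, g y) ∈ S)
    (hloc : ∀ y ∈ K, ∃ δ, IsGraphNear S (y, g y) δ) :
    ∃ ε > 0, ∀ y ∈ K, (∀ y', ‖y' - y‖ ≤ ε → ∃ z, |z - g y| ≤ ‖y' - y‖ ∧ (y', z) ∈ S) ∧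
      ∀ p₁ ∈ S, ∀ p₂ ∈ S, dist p₁ (y, g y) < 10 * ε → dist p₂ (y, g y) < 10 * ε →
        |p₁.2 - p₂.2| ≤ ‖p₁.1 - p₂.1‖ := by
  suffices h : ∃ ε₀ > 0, ∀ y ∈ K, ∀ ε, 0 < ε → ε ≤ ε₀ →
      (∀ y', ‖y' - y‖ ≤ ε → ∃ z, |z - g y| ≤ ‖y' - y‖ ∧ (y', z) ∈ S) ∧
      ∀ p₁ ∈ S, ∀ p₂ ∈ S, dist p₁ (y, g y) < 10 * ε → dist p₂ (y, g y) < 10 * ε →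
        |p₁.2 - p₂.2| ≤ ‖p₁.1 - p₂.1‖ by
    obtain ⟨ε, hε, h⟩ := h
    exact ⟨ε, hε, fun y hy => h y hy ε hε le_rfl⟩
  refine hK.induction_on (p := fun s => ∃ ε₀ > 0, ∀ y ∈ s, ∀ ε, 0 < ε → ε ≤ ε₀ →
      (∀ y', ‖y' - y‖ ≤ ε → ∃ z, |z - g y| ≤ ‖y' - y‖ ∧ (y', z) ∈ S) ∧
      ∀ p₁ ∈ S, ∀ p₂ ∈ S, dist p₁ (y, g y) < 10 * ε → dist p₂ (y, g y) < 10 * ε →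
        |p₁.2 - p₂.2| ≤ ‖p₁.1 - p₂.1‖) ⟨1, one_pos, by simp⟩ ?_ ?_ ?_
  · rintro s t hst ⟨ε, hε, h⟩
    exact ⟨ε, hε, fun y hy => h y (hst hy)⟩
  · rintro s t ⟨ε, hε, h⟩ ⟨ε', hε', h'⟩
    refine ⟨min ε ε', lt_min hε hε', fun y hy r hr hrε => ?_⟩
    rcases hy with hy | hy
    · exact h y hy r hr (hrε.trans (min_le_left _ _))
    · exact h' y hy r hr (hrε.trans (min_le_right _ _))
  · intro y₀ hy₀
    obtain ⟨δ, hδ, hlip, hex⟩ := hloc y₀ hy₀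
    refine ⟨K ∩ ball y₀ (δ / 100), inter_mem self_mem_nhdsWithin
      (mem_nhdsWithin_of_mem_nhds (ball_mem_nhds _ (by positivity))), δ / 100, by positivity, ?_⟩
    rintro y ⟨hyK, hy⟩ ε hε hεδ
    rw [mem_ball, dist_eq_norm] at hy
    have hgy := hg y y₀
    have hdist : dist (y, g y) (y₀, g y₀) < δ / 10 := by
      rw [Prod.dist_eq, max_lt_iff, dist_eq_norm, Real.dist_eq]
      constructor <;> simp only <;> linarith
    refine ⟨fun y' hy' => ?_, fun p₁ h₁ p₂ h₂ hd₁ hd₂ => hlip p₁ h₁ p₂ h₂ ?_ ?_⟩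
    · have hyy : ‖y' - y₀‖ ≤ ‖y' - y‖ + ‖y - y₀‖ := norm_sub_le_norm_sub_add_norm_sub ..
      obtain ⟨z, hz, hzS⟩ := hex (δ / 25) (by positivity) (by linarith) y' (by simp only; linarith)
      refine ⟨z, hlip (y', z) hzS (y, g y) (hmem y hyK) ?_ (by linarith), hzS⟩
      rw [Prod.dist_eq, max_lt_iff, dist_eq_norm, Real.dist_eq]
      simp only at hz ⊢
      constructor <;> linarith
    · linarith [dist_triangle p₁ (y, g y) (y₀, g y₀)]
    · linarith [dist_triangle p₂ (y, g y) (y₀, g y₀)]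

theorem exists_graphOver_of_isGraphNear [ProperSpace E] {g : E → ℝ} (hr : 0 < r₀) (hR0 : 0 ≤ R)
    (hR : R ≤ r₀ / 96) (hg : ∀ y y', |g y - g y'| ≤ ‖y - y'‖) (hg0 : g 0 = 0)
    (hmem : ∀ y ∈ closedBall (0 : E) R, (y, g y) ∈ S)
    (hloc : ∀ y ∈ closedBall (0 : E) R, ∃ δ, IsGraphNear S (y, g y) δ) :
    ∃ R' > R, ∃ v, GraphOver S r₀ R' v := by
  obtain ⟨ε, hε, h⟩ := exists_uniform_graph (isCompact_closedBall 0 R) hg hmem hloc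
  set ρ := min ε (r₀ / 96)
  have hρ : 0 < ρ := by positivity
  have hρε : ρ ≤ ε := min_le_left _ _
  have hρr : ρ ≤ r₀ / 96 := min_le_right _ _
  have hex : ∀ y' : E, ∃ y z, y' ∈ ball (0 : E) (R + ρ) →
      y ∈ closedBall (0 : E) R ∧ ‖y' - y‖ < ρ ∧ |z - g y| < ρ ∧ (y', z) ∈ S := by
    intro y'
    by_cases hy' : y' ∈ ball (0 : E) (R + ρ)
    · obtain ⟨y, hy, hyy⟩ : ∃ y ∈ closedBall (0 : E) R, ‖y' - y‖ < ρ := by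
        rw [mem_ball_zero_iff] at hy'
        rcases le_or_gt ‖y'‖ R with hle | hlt
        · exact ⟨y', by simpa using hle, by simpa using hρ⟩
        · have h0 : 0 < ‖y'‖ := hR0.trans_lt hlt
          refine ⟨(R / ‖y'‖) • y', ?_, ?_⟩
          · rw [mem_closedBall_zero_iff, norm_smul, Real.norm_of_nonneg (by positivity),
              div_mul_cancel₀ _ h0.ne']
          · have : y' - (R / ‖y'‖) • y' = (1 - R / ‖y'‖) • y' := by rw [sub_smul, one_smul]
            rw [this, norm_smul, Real.norm_of_nonneg
              (sub_nonneg.2 ((div_le_one h0).2 hlt.le)), sub_mul, div_mul_cancel₀ _ h0.ne']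
            linarith
      obtain ⟨z, hz, hzS⟩ := (h y hy).1 y' (by linarith)
      exact ⟨y, z, fun _ => ⟨hy, hyy, by linarith, hzS⟩⟩
    · exact ⟨0, 0, fun h => absurd h hy'⟩
  choose Y v hYv using hex
  have hlip : ∀ y₁ ∈ ball (0 : E) (R + ρ), ∀ y₂ z₂, (y₂, z₂) ∈ S → ‖y₂ - y₁‖ < ρ →
      (∃ x, ‖y₂ - x‖ < ρ ∧ |z₂ - g x| < ρ) → |z₂ - v y₁| ≤ ‖y₂ - y₁‖ := by
    rintro y₁ h₁ y₂ z₂ hS₂ hyy ⟨x, hx, hzx⟩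
    obtain ⟨hY, hyY, hvY, hvS⟩ := hYv y₁ h₁
    have t1 : ‖y₂ - Y y₁‖ ≤ ‖y₂ - y₁‖ + ‖y₁ - Y y₁‖ := norm_sub_le_norm_sub_add_norm_sub ..
    have t2 : ‖x - Y y₁‖ ≤ ‖x - y₂‖ + ‖y₂ - Y y₁‖ := norm_sub_le_norm_sub_add_norm_sub ..
    have t3 : |z₂ - g (Y y₁)| ≤ |z₂ - g x| + |g x - g (Y y₁)| := abs_sub_le ..
    have t4 := hg x (Y y₁)
    rw [norm_sub_rev x y₂] at t2
    refine (h _ hY).2 (y₂, z₂) hS₂ (y₁, v y₁) hvS ?_ ?_ <;>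
    · rw [Prod.dist_eq, max_lt_iff, dist_eq_norm, Real.dist_eq]
      simp only
      constructor <;> linarith
  have h0R : (0 : E) ∈ ball (0 : E) (R + ρ) := mem_ball_self (by positivity)
  refine ⟨R + ρ, by linarith, v, ?_, fun y hy => (hYv y hy).2.2.2, fun y hy => ?_, fun y hy => ?_⟩
  · have := hlip 0 h0R 0 0 (by simpa [hg0] using hmem 0 (by simpa using hR0)) (by simpa using hρ)
      ⟨0, by simpa using hρ, by simpa [hg0] using hρ⟩
    simpa using this
  · obtain ⟨h1, h2, h3, -⟩ := hYv y hy
    have h4 := hg (Y y) 0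
    rw [mem_closedBall_zero_iff] at h1
    rw [hg0, sub_zero, sub_zero] at h4
    have h5 : |v y| ≤ |v y - g (Y y)| + |g (Y y)| := by
      simpa using abs_sub_le (v y) (g (Y y)) 0
    linarith
  · filter_upwards [isOpen_ball.mem_nhds hy, ball_mem_nhds y hρ] with y' h1 h2
    rw [mem_ball, dist_eq_norm] at h2
    obtain ⟨-, h3, h4, h5⟩ := hYv y' h1
    exact hlip y hy y' _ h5 h2 ⟨_, h3, h4⟩

theorem SheetedSet.exists_graphOver_pos [ProperSpace E] (hS : SheetedSet S r₀) :
    ∃ R > 0, ∃ u, GraphOver S r₀ R u := by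
  have hr := hS.pos
  obtain ⟨c, δ, h⟩ := hS.horizontal
  refine exists_graphOver_of_isGraphNear (g := 0) hr le_rfl (by positivity) (by simp) rfl ?_ ?_
  · simpa using hS.zero_mem
  · simpa using h.isGraphNear (by positivity) (by simp; positivity)

theorem GraphOver.exists_extension [ProperSpace E] (hS : SheetedSet S r₀)
    (hu : GraphOver S r₀ R u) (hR0 : 0 < R) (hR : R ≤ r₀ / 96) :
    ∃ R' > R, ∃ v, GraphOver S r₀ R' v := by
  have hr := hS.pos
  have hlip : LipschitzOnWith 1 u (ball 0 R) := LipschitzOnWith.of_dist_le_mul fun x hx y hy => by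
    have := hu.abs_sub_le hS hR hy hx
    rw [Real.dist_eq, dist_eq_norm, NNReal.coe_one]
    linarith [norm_nonneg (x - y)]
  obtain ⟨g, hg, hgu⟩ := hlip.extend_real
  have hg' : ∀ y y', |g y - g y'| ≤ ‖y - y'‖ := fun y y' => by
    simpa [Real.dist_eq, dist_eq_norm] using hg.dist_le_mul y y'
  have hg0 : g 0 = 0 := by rw [← hgu (mem_ball_self hR0), hu.zero]
  have hnorm : ∀ y ∈ closedBall (0 : E) R, ‖y‖ + |g y| < r₀ := fun y hy => by
    have := hg' y 0
    rw [mem_closedBall_zero_iff] at hy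
    rw [hg0, sub_zero, sub_zero] at this
    linarith
  have hlim : ∀ y ∈ closedBall (0 : E) R, ∀ ε > 0, ∃ y' ∈ ball (0 : E) R,
      ‖y' - y‖ < ε ∧ |u y' - g y| < ε := fun y hy ε hε => by
    rw [← closure_ball _ hR0.ne'] at hy
    obtain ⟨y', hy', hyy⟩ := Metric.mem_closure_iff.1 hy ε hε
    rw [dist_comm, dist_eq_norm] at hyy
    exact ⟨y', hy', hyy, by rw [hgu hy']; exact (hg' y' y).trans_lt hyy⟩
  have hmem : ∀ y ∈ closedBall (0 : E) R, (y, g y) ∈ S := fun y hy => by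
    refine hS.closed _ (Metric.mem_closure_iff.2 fun ε hε => ?_) (hnorm y hy)
    obtain ⟨y', hy', h1, h2⟩ := hlim y hy ε hε
    refine ⟨_, hu.mem y' hy', ?_⟩
    rw [dist_comm, Prod.dist_eq, max_lt_iff, dist_eq_norm, Real.dist_eq]
    exact ⟨h1, h2⟩
  exact exists_graphOver_of_isGraphNear hr hR0.le hR hg' hg0 hmem fun y hy =>
    hu.isGraphNear hS hR (hmem y hy) (hnorm y hy) (hlim y hy)

/-- Graphs over all smaller balls glue to a graph over the ball. -/
theorem SheetedSet.exists_graphOver_of_forall_lt (hS : SheetedSet S r₀) (hR0 : 0 < R)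
    (hR : R ≤ r₀ / 96) (h : ∀ R' < R, ∃ u, GraphOver S r₀ R' u) : ∃ u, GraphOver S r₀ R u := by
  choose! w hw using h
  have hmid : ∀ y ∈ ball (0 : E) R, ‖y‖ < (‖y‖ + R) / 2 ∧ (‖y‖ + R) / 2 < R := fun y hy => by
    rw [mem_ball_zero_iff] at hy
    constructor <;> linarith
  set v : E → ℝ := fun y => w ((‖y‖ + R) / 2) y with hv
  have heq : ∀ R' < R, ∀ y ∈ ball (0 : E) R', v y = w R' y := by
    intro R' hR' y hy
    obtain ⟨h1, h2⟩ := hmid y (ball_subset_ball hR'.le hy)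
    have hmin : min ((‖y‖ + R) / 2) R' ≤ r₀ / 96 := (min_le_right _ _).trans (hR'.le.trans hR)
    refine ((hw _ h2).mono (min_le_left _ R')).eqOn hS ((hw _ hR').mono (min_le_right _ _)) hmin ?_
    rw [mem_ball_zero_iff] at hy ⊢
    exact lt_min h1 hy
  refine ⟨v, ?_, fun y hy => ?_, fun y hy => ?_, fun y hy => ?_⟩
  · exact (hw _ (hmid 0 (mem_ball_self hR0)).2).zero
  · exact (hw _ (hmid y hy).2).mem y (by simpa using (hmid y hy).1)
  · exact (hw _ (hmid y hy).2).bound y (by simpa using (hmid y hy).1)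
  · obtain ⟨h1, h2⟩ := hmid y hy
    have hy' : y ∈ ball (0 : E) ((‖y‖ + R) / 2) := by simpa using h1
    filter_upwards [(hw _ h2).lip y hy', isOpen_ball.mem_nhds hy'] with x hx hx'
    rwa [heq _ h2 x hx', heq _ h2 y hy']

theorem SheetedSet.exists_graphOver [ProperSpace E] (hS : SheetedSet S r₀) :
    ∃ u, GraphOver S r₀ (r₀ / 96) u := by
  have hr := hS.pos
  set T : Set ℝ := {R | R ≤ r₀ / 96 ∧ ∃ u, GraphOver S r₀ R u}
  have hT : ∀ R ∈ T, ∀ R' ≤ R, R' ∈ T := fun R ⟨h1, u, hu⟩ R' h =>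
    ⟨h.trans h1, u, hu.mono h⟩
  have hbdd : BddAbove T := ⟨r₀ / 96, fun R hR => hR.1⟩
  obtain ⟨R₁, hR₁, u₁, hu₁⟩ := hS.exists_graphOver_pos
  have hmem₁ : min R₁ (r₀ / 96) ∈ T := ⟨min_le_right _ _, u₁, hu₁.mono (min_le_left _ _)⟩
  have hpos : 0 < sSup T := (lt_min hR₁ (by positivity)).trans_le (le_csSup hbdd hmem₁)
  have hle : sSup T ≤ r₀ / 96 := csSup_le ⟨_, hmem₁⟩ fun R hR => hR.1
  obtain ⟨u, hu⟩ := hS.exists_graphOver_of_forall_lt hpos hle fun R' hR' => by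
    obtain ⟨R, hR, hlt⟩ := exists_lt_of_lt_csSup ⟨_, hmem₁⟩ hR'
    exact (hT R hR R' hlt.le).2
  rcases hle.eq_or_lt with heq | hlt
  · exact ⟨u, heq ▸ hu⟩
  · obtain ⟨R', hR', v, hv⟩ := hu.exists_extension hS hpos hle
    have : min R' (r₀ / 96) ∈ T := ⟨min_le_right _ _, v, hv.mono (min_le_left _ _)⟩
    exact absurd (le_csSup hbdd this) (not_le.2 (lt_min hR' hlt))

end Sheets

section Euclidean

open Filter Topology

variable {n : ℕ}

theorem snocE_castSucc (y : EuclideanSpace ℝ (Fin n)) (a : ℝ) (i : Fin n) :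
    snocE y a i.castSucc = y i := by
  simp [snocE]

theorem snocE_last (y : EuclideanSpace ℝ (Fin n)) (a : ℝ) : snocE y a (Fin.last n) = a := by
  simp [snocE]

theorem projE_apply (z : EuclideanSpace ℝ (Fin (n + 1))) (i : Fin n) :
    projE z i = z i.castSucc := rfl

theorem projE_snocE (y : EuclideanSpace ℝ (Fin n)) (a : ℝ) : projE (snocE y a) = y := by
  ext i; rw [projE_apply, snocE_castSucc]

theorem snocE_projE (z : EuclideanSpace ℝ (Fin (n + 1))) :
    snocE (projE z) (z (Fin.last n)) = z := by
  ext i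
  refine Fin.lastCases ?_ (fun i => ?_) i
  · rw [snocE_last]
  · rw [snocE_castSucc, projE_apply]

theorem snocE_sub (y y' : EuclideanSpace ℝ (Fin n)) (a a' : ℝ) :
    snocE y a - snocE y' a' = snocE (y - y') (a - a') := by
  ext i
  refine Fin.lastCases ?_ (fun i => ?_) i
  · simp [snocE_last]
  · simp [snocE_castSucc]

theorem snocE_zero : snocE (0 : EuclideanSpace ℝ (Fin n)) 0 = 0 := by
  simpa using (snocE_sub (0 : EuclideanSpace ℝ (Fin n)) 0 0 0).symm

theorem inner_snocE (z : EuclideanSpace ℝ (Fin (n + 1))) (y : EuclideanSpace ℝ (Fin n)) (a : ℝ) :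
    inner ℝ z (snocE y a) = inner ℝ (projE z) y + z (Fin.last n) * a := by
  simp only [PiLp.inner_apply, Fin.sum_univ_castSucc, snocE_castSucc, snocE_last, projE_apply]
  simp [mul_comm]

theorem norm_snocE_sq (y : EuclideanSpace ℝ (Fin n)) (a : ℝ) :
    ‖snocE y a‖ ^ 2 = ‖y‖ ^ 2 + a ^ 2 := by
  rw [← real_inner_self_eq_norm_sq, inner_snocE, projE_snocE, snocE_last,
    real_inner_self_eq_norm_sq, sq a]

theorem norm_snocE_le (y : EuclideanSpace ℝ (Fin n)) (a : ℝ) : ‖snocE y a‖ ≤ ‖y‖ + |a| := by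
  refine le_of_sq_le_sq ?_ (by positivity)
  rw [norm_snocE_sq, ← sq_abs a]
  nlinarith [mul_nonneg (norm_nonneg y) (abs_nonneg a)]

theorem norm_le_norm_snocE (y : EuclideanSpace ℝ (Fin n)) (a : ℝ) : ‖y‖ ≤ ‖snocE y a‖ := by
  refine le_of_sq_le_sq ?_ (by positivity)
  rw [norm_snocE_sq]
  nlinarith [sq_nonneg a]

theorem norm_projE_le (z : EuclideanSpace ℝ (Fin (n + 1))) : ‖projE z‖ ≤ ‖z‖ := by
  conv_rhs => rw [← snocE_projE z]
  exact norm_le_norm_snocE _ _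

theorem continuous_projE : Continuous (projE (n := n)) := by
  unfold projE
  exact (PiLp.continuous_toLp 2 _).comp (continuous_pi fun i => by
    simpa using (PiLp.continuous_apply 2 _ i.castSucc))

theorem continuous_snocE :
    Continuous fun p : EuclideanSpace ℝ (Fin n) × ℝ => snocE p.1 p.2 := by
  unfold snocE
  refine (PiLp.continuous_toLp 2 _).comp (continuous_pi fun i => ?_)
  refine Fin.lastCases ?_ (fun i => ?_) i
  · simpa using continuous_snd
  · simpa [Function.comp_def] using
      (PiLp.continuous_apply 2 (fun _ : Fin n => ℝ) i).comp continuous_fst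

/-- A graph chart with Hessian at most `1 / r₀` at its centre makes `S` a sheet there. -/
theorem IsGraphChartAt.localSheet {S : Set (EuclideanSpace ℝ (Fin (n + 1)))}
    {p : EuclideanSpace ℝ (Fin n) × ℝ}
    {e : EuclideanSpace ℝ (Fin (n + 1)) ≃ₗᵢ[ℝ] EuclideanSpace ℝ (Fin (n + 1))}
    {r r₀ : ℝ} {f : EuclideanSpace ℝ (Fin n) → ℝ} (h : IsGraphChartAt n S (snocE p.1 p.2) e r f)
    (hr₀ : 0 < r₀) (hf : ‖fderiv ℝ (fderiv ℝ f) 0‖ ≤ 1 / r₀) :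
    ∃ δ, LocalSheet {x : EuclideanSpace ℝ (Fin n) × ℝ | snocE x.1 x.2 ∈ S} (2 / r₀) p
      (projE (e (snocE 0 1))) (e (snocE 0 1) (Fin.last n)) δ := by
  obtain ⟨hr, hf0, hdf0, hf2, hSr⟩ := h
  set q := snocE p.1 p.2 with hq
  set N := e (snocE 0 1) with hN
  set a := projE N
  set c := N (Fin.last n)
  have hinner : ∀ y t, inner ℝ N (snocE y t) = inner ℝ a y + c * t := fun y t => inner_snocE N y t
  have hone : 1 ≤ ‖a‖ + |c| := by
    have h1 : ‖N‖ = 1 := by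
      rw [hN, e.norm_map, ← sq_eq_sq₀ (norm_nonneg _) zero_le_one, norm_snocE_sq]
      simp
    rw [← h1]
    conv_lhs => rw [← snocE_projE N]
    exact norm_snocE_le _ _
  have hderiv : ∀ᶠ x in 𝓝 (0 : EuclideanSpace ℝ (Fin n)), ‖fderiv ℝ f x‖ ≤ 2 / r₀ * ‖x‖ := by
    have hcd : ContDiffAt ℝ 2 f 0 := hf2.contDiffAt (ball_mem_nhds _ hr)
    have hd : HasFDerivAt (fderiv ℝ f) (fderiv ℝ (fderiv ℝ f) 0) 0 :=
      ((hcd.fderiv_right (m := 1) (by norm_num)).differentiableAt (by norm_num)).hasFDerivAt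
    have := (hasFDerivAt_iff_isLittleO.1 hd).bound (c := 1 / r₀) (by positivity)
    filter_upwards [this] with x hx
    rw [hdf0, sub_zero, sub_zero] at hx
    have h1 : ‖fderiv ℝ (fderiv ℝ f) 0 x‖ ≤ 1 / r₀ * ‖x‖ :=
      ContinuousLinearMap.le_of_opNorm_le _ hf x
    have h2 := norm_sub_norm_le (fderiv ℝ f x) (fderiv ℝ (fderiv ℝ f) 0 x)
    have h3 : 2 / r₀ * ‖x‖ = 1 / r₀ * ‖x‖ + 1 / r₀ * ‖x‖ := by ring
    linarith
  obtain ⟨d, hd, hderiv⟩ := Metric.eventually_nhds_iff_ball.1 hderiv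
  have hlip : ∀ m, m < d → m < r → ∀ x₁ x₂, ‖x₁‖ ≤ m → ‖x₂‖ ≤ m →
      |f x₁ - f x₂| ≤ 2 / r₀ * m * ‖x₁ - x₂‖ := by
    intro m hmd hmr x₁ x₂ h₁ h₂
    refine (convex_closedBall (0 : EuclideanSpace ℝ (Fin n)) m).norm_image_sub_le_of_norm_fderiv_le
      (𝕜 := ℝ) (f := f) (fun x hx => ?_) (fun x hx => ?_) (by simpa using h₂) (by simpa using h₁)
    · exact (hf2.contDiffAt (isOpen_ball.mem_nhds (closedBall_subset_ball hmr hx))).differentiableAt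
        (by norm_num)
    · refine (hderiv x (closedBall_subset_ball hmd hx)).trans ?_
      gcongr
      simpa using hx
  set δ := min (min (d / 4) (r / 4)) (r₀ / 100)
  have hδ : 0 < δ := by positivity
  have hδd : δ ≤ d / 4 := (min_le_left _ _).trans (min_le_left _ _)
  have hδr : δ ≤ r / 4 := (min_le_left _ _).trans (min_le_right _ _)
  have hδr₀ : δ ≤ r₀ / 100 := min_le_right _ _
  refine ⟨δ, hδ, hone, ?_, ?_⟩
  · have hrep : ∀ m < δ, ∀ x : EuclideanSpace ℝ (Fin n) × ℝ, snocE x.1 x.2 ∈ S →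
        ‖x.1 - p.1‖ + |x.2 - p.2| ≤ m →
        ∃ y, ‖y‖ ≤ m ∧ snocE x.1 x.2 = q + e (snocE y (f y)) := by
      intro m hm x hx hxm
      have hdist : ‖snocE x.1 x.2 - q‖ ≤ m := by
        rw [hq, snocE_sub]; exact (norm_snocE_le _ _).trans hxm
      have hmem : snocE x.1 x.2 ∈ S ∩ ball q r :=
        ⟨hx, by rw [mem_ball, dist_eq_norm]; linarith⟩
      rw [hSr] at hmem
      obtain ⟨-, y, -, hy⟩ := hmem
      refine ⟨y, ?_, hy⟩
      rw [hy, add_sub_cancel_left, e.norm_map] at hdist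
      exact (norm_le_norm_snocE _ _).trans hdist
    intro m hm x₁ hx₁ x₂ hx₂ hm₁ hm₂
    obtain ⟨y₁, hy₁, he₁⟩ := hrep m hm x₁ hx₁ hm₁
    obtain ⟨y₂, hy₂, he₂⟩ := hrep m hm x₂ hx₂ hm₂
    have hm0 : 0 ≤ m := (norm_nonneg _).trans hy₁
    have hdiff : snocE (x₁.1 - x₂.1) (x₁.2 - x₂.2) = e (snocE (y₁ - y₂) (f y₁ - f y₂)) := by
      rw [← snocE_sub, he₁, he₂, ← snocE_sub, map_sub]; abel
    have hval : inner ℝ a (x₁.1 - x₂.1) + c * (x₁.2 - x₂.2) = f y₁ - f y₂ := by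
      rw [← hinner, hdiff, hN, e.inner_map_map, inner_snocE, projE_snocE, snocE_last]
      simp
    have hyy : ‖y₁ - y₂‖ ≤ ‖x₁.1 - x₂.1‖ + |x₁.2 - x₂.2| := by
      refine (norm_le_norm_snocE _ (f y₁ - f y₂)).trans ?_
      rw [← e.norm_map, ← hdiff]
      exact norm_snocE_le _ _
    rw [hval]
    refine (hlip m (by linarith) (by linarith) y₁ y₂ hy₁ hy₂).trans ?_
    gcongr
  · intro hac s hs hsδ y hy
    have hc : 3 / 4 ≤ |c| := by linarith
    have hw : ∀ z, |z - p.2| ≤ s → ‖snocE (y - p.1) (z - p.2)‖ ≤ 3 / 2 * s := fun z hz => by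
      linarith [norm_snocE_le (y - p.1) (z - p.2)]
    set X : ℝ → EuclideanSpace ℝ (Fin n) :=
      fun z => projE (e.symm (snocE (y - p.1) (z - p.2))) with hX
    have hXn : ∀ z, |z - p.2| ≤ s → ‖X z‖ ≤ 3 / 2 * s := fun z hz =>
      (norm_projE_le _).trans ((e.symm.norm_map _).le.trans (hw z hz))
    have hfX : ∀ z, |z - p.2| ≤ s → |f (X z)| ≤ s / 10 := fun z hz => by
      have h1 := hlip (3 / 2 * s) (by linarith) (by linarith) (X z) 0 (hXn z hz)
        (by simpa using hs.le)
      rw [hf0, sub_zero, sub_zero] at h1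
      refine h1.trans ?_
      calc 2 / r₀ * (3 / 2 * s) * ‖X z‖ ≤ 2 / r₀ * (3 / 2 * s) * (3 / 2 * s) := by
            gcongr; exact hXn z hz
        _ = 9 / 2 * (s / r₀) * s := by ring
        _ ≤ 9 / 2 * (1 / 100) * s := by
            have : s / r₀ ≤ 1 / 100 := by rw [div_le_iff₀ hr₀]; linarith
            gcongr
        _ ≤ s / 10 := by linarith
    set G : ℝ → ℝ := fun z => inner ℝ a (y - p.1) + c * (z - p.2) - f (X z) with hG
    have hGclose : ∀ z, |z - p.2| ≤ s → |G z - c * (z - p.2)| < |c| * s := fun z hz => by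
      have h1 : |inner ℝ a (y - p.1)| ≤ |c| / 3 * (s / 2) :=
        (abs_real_inner_le_norm _ _).trans (by gcongr)
      have h2 := hfX z hz
      have h3 : G z - c * (z - p.2) = inner ℝ a (y - p.1) - f (X z) := by simp only [hG]; ring
      rw [h3]
      have h4 := abs_sub (inner ℝ a (y - p.1)) (f (X z))
      nlinarith
    have hplus := abs_lt.1 (hGclose (p.2 + s) (by simp [abs_of_pos hs]))
    have hminus := abs_lt.1 (hGclose (p.2 - s) (by simp [abs_of_pos hs]))
    have hicc : ∀ z ∈ Set.uIcc (p.2 - s) (p.2 + s), |z - p.2| ≤ s := fun z hz => by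
      rw [Set.uIcc_of_le (by linarith)] at hz
      rw [abs_le]
      constructor <;> linarith [hz.1, hz.2]
    have hGcont : ContinuousOn G (Set.uIcc (p.2 - s) (p.2 + s)) := by
      refine ContinuousOn.sub (by fun_prop) ?_
      refine hf2.continuousOn.comp (Continuous.continuousOn ?_) fun z hz => ?_
      · exact continuous_projE.comp (e.symm.continuous.comp
          (continuous_snocE.comp (by fun_prop : Continuous fun z : ℝ => (y - p.1, z - p.2))))
      · rw [mem_ball_zero_iff]
        linarith [hXn z (hicc z hz)]
    have hzero : (0 : ℝ) ∈ Set.uIcc (G (p.2 - s)) (G (p.2 + s)) := by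
      have e1 : c * (p.2 + s - p.2) = c * s := by ring
      have e2 : c * (p.2 - s - p.2) = -(c * s) := by ring
      rw [e1] at hplus
      rw [e2] at hminus
      rw [Set.mem_uIcc]
      rcases le_total 0 c with h0 | h0
      · rw [abs_of_nonneg h0] at hplus hminus
        left; constructor <;> linarith
      · rw [abs_of_nonpos h0] at hplus hminus
        right; constructor <;> linarith
    obtain ⟨z, hz, hGz⟩ := intermediate_value_uIcc hGcont hzero
    refine ⟨z, hicc z hz, ?_⟩
    set W := snocE (y - p.1) (z - p.2) with hW
    have hWq : snocE y z = q + W := by rw [hW, ← snocE_sub, hq]; abel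
    have hlast : e.symm W (Fin.last n) = f (X z) := by
      have h1 : inner ℝ (snocE 0 1) (e.symm W) = e.symm W (Fin.last n) := by
        rw [real_inner_comm, inner_snocE]; simp
      have h2 : inner ℝ (snocE 0 1) (e.symm W) = inner ℝ N W := by
        rw [hN, ← e.inner_map_map, e.apply_symm_apply]
      rw [← h1, h2, hinner]
      linarith
    have hWe : W = e (snocE (X z) (f (X z))) := by
      rw [← hlast, hX]
      simp only
      rw [← hW, snocE_projE, e.apply_symm_apply]
    have hWn := hw z (hicc z hz)
    have hmem : snocE y z ∈ S ∩ ball q r := by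
      rw [hSr]
      refine ⟨?_, X z, ?_, by rw [hWq, ← hWe]⟩
      · rw [mem_ball, dist_eq_norm, hWq, add_sub_cancel_left]
        linarith
      · rw [mem_ball_zero_iff]
        linarith [hXn z (hicc z hz)]
    exact hmem.1

theorem sheetedSet_of_isGraphChartAt {r₀ : ℝ} (hr₀ : 0 < r₀)
    {S : Set (EuclideanSpace ℝ (Fin (n + 1)))}
    (h0S : (0 : EuclideanSpace ℝ (Fin (n + 1))) ∈ S)
    (hproper : closure S ∩ ball (0 : EuclideanSpace ℝ (Fin (n + 1))) r₀ ⊆ S)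
    (hsurf : ∀ q ∈ S ∩ ball (0 : EuclideanSpace ℝ (Fin (n + 1))) r₀,
      ∃ e r f, IsGraphChartAt n S q e r f)
    (hSFF : ∀ q ∈ S ∩ ball (0 : EuclideanSpace ℝ (Fin (n + 1))) r₀,
      ∀ e r f, IsGraphChartAt n S q e r f → ‖fderiv ℝ (fderiv ℝ f) 0‖ ≤ 1 / r₀)
    (htangent : ∃ r f, IsGraphChartAt n S 0
      (LinearIsometryEquiv.refl ℝ (EuclideanSpace ℝ (Fin (n + 1)))) r f) :
    SheetedSet {x : EuclideanSpace ℝ (Fin n) × ℝ | snocE x.1 x.2 ∈ S} r₀ where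
  pos := hr₀
  zero_mem := by simpa [snocE_zero] using h0S
  closed p hp hpr := hproper ⟨map_mem_closure
    (f := fun x : EuclideanSpace ℝ (Fin n) × ℝ => snocE x.1 x.2) continuous_snocE hp
    fun _ hx => hx, by
    rw [mem_ball_zero_iff]; exact (norm_snocE_le _ _).trans_lt hpr⟩
  sheet p hp hpr := by
    have hq : snocE p.1 p.2 ∈ S ∩ ball 0 r₀ :=
      ⟨hp, by rw [mem_ball_zero_iff]; exact (norm_snocE_le _ _).trans_lt hpr⟩
    obtain ⟨e, r, f, h⟩ := hsurf _ hq
    exact ⟨_, _, h.localSheet hr₀ (hSFF _ hq e r f h)⟩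
  horizontal := by
    obtain ⟨r, f, h⟩ := htangent
    have hf := hSFF 0 ⟨h0S, mem_ball_self hr₀⟩ _ r f h
    rw [← snocE_zero] at h
    obtain ⟨δ, h⟩ := IsGraphChartAt.localSheet (p := (0, 0)) h hr₀ hf
    rw [LinearIsometryEquiv.coe_refl, id, projE_snocE] at h
    exact ⟨_, δ, h⟩

/-- If `S` coincides, near each point of a continuous graph over a ball that lies in `S`, with
this graph, then the graph is the component of `S` in the cylinder over the ball. -/
theorem connectedComponentIn_eq_graph {S : Set (EuclideanSpace ℝ (Fin (n + 1)))} {ρ : ℝ}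
    {u : EuclideanSpace ℝ (Fin n) → ℝ} (hρ : 0 < ρ) (h0 : u 0 = 0)
    (hu : ContinuousOn u (ball 0 ρ)) (hmem : ∀ y ∈ ball 0 ρ, snocE y (u y) ∈ S)
    (hsheet : ∀ y ∈ ball 0 ρ, ∀ᶠ z in 𝓝 (snocE y (u y)), z ∈ S → z (Fin.last n) = u (projE z)) :
    connectedComponentIn (S ∩ {z | ‖projE z‖ < ρ}) 0 = (fun y => snocE y (u y)) '' ball 0 ρ := by
  have h0ρ : (0 : EuclideanSpace ℝ (Fin n)) ∈ ball 0 ρ := mem_ball_self hρ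
  have h0im : (0 : EuclideanSpace ℝ (Fin (n + 1))) ∈ (fun y => snocE y (u y)) '' ball 0 ρ :=
    ⟨0, h0ρ, by simp only [h0, snocE_zero]⟩
  have hsub : (fun y => snocE y (u y)) '' ball 0 ρ ⊆ S ∩ {z | ‖projE z‖ < ρ} := by
    rintro _ ⟨y, hy, rfl⟩
    exact ⟨hmem y hy, by simpa [projE_snocE] using hy⟩
  refine subset_antisymm ?_ ?_
  · set C := connectedComponentIn (S ∩ {z | ‖projE z‖ < ρ}) 0
    have hC : C ⊆ S ∩ {z | ‖projE z‖ < ρ} := connectedComponentIn_subset _ _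
    set U := {z | ∀ᶠ x in 𝓝 z, x ∈ S → x (Fin.last n) = u (projE x)}
    set V := {z | ‖projE z‖ < ρ} ∩ {z | z (Fin.last n) - u (projE z) ≠ 0}
    have hV : IsOpen V := by
      have hopen : IsOpen {z : EuclideanSpace ℝ (Fin (n + 1)) | ‖projE z‖ < ρ} :=
        isOpen_lt continuous_projE.norm continuous_const
      refine ContinuousOn.isOpen_inter_preimage ?_ hopen isOpen_ne
      refine (PiLp.continuous_apply 2 _ _).continuousOn.sub
        (hu.comp continuous_projE.continuousOn fun z hz => ?_)
      simpa using hz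
    have hgraph : ∀ z ∈ C, z ∉ V → z ∈ (fun y => snocE y (u y)) '' ball 0 ρ := fun z hz hzV => by
      have hlast : z (Fin.last n) = u (projE z) :=
        sub_eq_zero.1 (by_contra fun hne => hzV ⟨(hC hz).2, hne⟩)
      exact ⟨projE z, mem_ball_zero_iff.2 (hC hz).2, by simp only [← hlast, snocE_projE]⟩
    have hgraphU : (fun y => snocE y (u y)) '' ball 0 ρ ⊆ U := by
      rintro _ ⟨y, hy, rfl⟩
      exact hsheet y hy
    refine fun z hz => hgraph z hz fun hzV => ?_
    obtain ⟨x, hxC, hxU, hxV⟩ := isPreconnected_connectedComponentIn U V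
      isOpen_setOfPred_eventually_nhds hV
      (fun x hx => or_iff_not_imp_right.2 fun hxV => hgraphU (hgraph x hx hxV))
      ⟨0, mem_connectedComponentIn (hsub h0im), hgraphU h0im⟩ ⟨z, hz, hzV⟩
    exact hxV.2 (sub_eq_zero.2 (hxU.self_of_nhds (hC hxC).1))
  · refine IsPreconnected.subset_connectedComponentIn ?_ h0im hsub
    exact (convex_ball _ _).isPreconnected.image _
      (continuous_snocE.comp_continuousOn (continuousOn_id.prodMk hu))

end Euclidean

/-- Chen–Yin local graph lemma: a hypersurface `S` properly embedded in `B_{r₀}(0)`,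
containing `0`, with tangent plane `{x^{n+1} = 0}` at `0` and `|A| ≤ 1/r₀`, is, over the
cylinder of radius `r₀/96`, the graph of a function `u` with `u(0) = 0`, `∇u(0) = 0`, and
`|∇u(x')| ≤ 36|x'|/r₀`. -/
theorem stmt_19 (n : ℕ) (r₀ : ℝ) (hr₀ : 0 < r₀)
    (S : Set (EuclideanSpace ℝ (Fin (n + 1))))
    (h0S : (0 : EuclideanSpace ℝ (Fin (n + 1))) ∈ S)
    (hproper : closure S ∩ ball (0 : EuclideanSpace ℝ (Fin (n + 1))) r₀ ⊆ S)
    (hsurf : ∀ q ∈ S ∩ ball (0 : EuclideanSpace ℝ (Fin (n + 1))) r₀,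
      ∃ e r f, IsGraphChartAt n S q e r f)
    (hSFF : ∀ q ∈ S ∩ ball (0 : EuclideanSpace ℝ (Fin (n + 1))) r₀,
      ∀ e r f, IsGraphChartAt n S q e r f → ‖fderiv ℝ (fderiv ℝ f) 0‖ ≤ 1 / r₀)
    (htangent : ∃ r f, IsGraphChartAt n S 0
      (LinearIsometryEquiv.refl ℝ (EuclideanSpace ℝ (Fin (n + 1)))) r f) :
    ∃ u : EuclideanSpace ℝ (Fin n) → ℝ,
      u 0 = 0 ∧ fderiv ℝ u 0 = 0 ∧
      (∀ y : EuclideanSpace ℝ (Fin n), ‖y‖ < r₀ / 96 → ‖fderiv ℝ u y‖ ≤ 36 * ‖y‖ / r₀) ∧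
      connectedComponentIn (S ∩ {z | ‖projE z‖ < r₀ / 96}) 0 =
        (fun y => snocE y (u y)) '' ball (0 : EuclideanSpace ℝ (Fin n)) (r₀ / 96) := by
  have hS := sheetedSet_of_isGraphChartAt hr₀ h0S hproper hsurf hSFF htangent
  obtain ⟨u, hu⟩ := hS.exists_graphOver
  refine ⟨u, hu.zero, hu.fderiv_zero hS (by positivity), fun y hy => ?_,
    connectedComponentIn_eq_graph (by positivity) hu.zero (hu.continuousOn hS le_rfl) hu.mem
      fun y hy => ?_⟩
  · refine (hu.norm_fderiv_le hS le_rfl (mem_ball_zero_iff.2 hy)).trans ?_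
    rw [div_mul_eq_mul_div]
    gcongr
    norm_num
  · obtain ⟨δ, hδ, hlip, -⟩ := hu.isGraphNear_self hS le_rfl hy
    have hcont : ContinuousAt projE (snocE y (u y)) := continuous_projE.continuousAt
    have hproj : Filter.Tendsto projE (nhds (snocE y (u y))) (nhds y) := by
      simpa [ContinuousAt, projE_snocE] using hcont
    have hlast : Filter.Tendsto (fun z : EuclideanSpace ℝ (Fin (n + 1)) => z (Fin.last n))
        (nhds (snocE y (u y))) (nhds (u y)) := by
      simpa [snocE_last] using
        (PiLp.continuous_apply 2 (fun _ : Fin (n + 1) => ℝ) (Fin.last n)).tendsto (snocE y (u y))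
    have huy := (hu.differentiableAt hS le_rfl hy).continuousAt.tendsto.comp hproj
    filter_upwards [(hproj.prodMk_nhds hlast).eventually (ball_mem_nhds _ hδ),
      (hproj.prodMk_nhds huy).eventually (ball_mem_nhds _ hδ),
      hproj.eventually (isOpen_ball.mem_nhds hy)] with z h1 h2 h3 hz
    have := hlip (projE z, z (Fin.last n)) (by simpa [snocE_projE] using hz)
      (projE z, u (projE z)) (hu.mem _ h3) h1 h2
    simpa [sub_eq_zero] using this
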